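/- arXiv:2410.02839 — 4 statements merged into one kernel-verified Lean document; each statement's English description precedes it below -/
import Mathlib

section
/- Let f be a smooth frame on ℝ⁴ with connecting field C_f and torsion T_f x a b c = C_f x a b c − C_f x a c b, and let x ∈ ℝ⁴. Then T_f x a b c = 0 for all a, b, c if and only if [f j, f k](x) = 0 for all j, k. In particular, the torsion of the derivative operator parallelising the frame f is non-vanishing at x if and only if the frame is anholonomic at x. -/
/-! The derivative operator parallelising a frame `(e_i)` has connecting field
`C(v, e_k) = ∂_v e_k`. Hence its torsion satisfies
`T(e_j, e_k) = ∂_{e_j} e_k - ∂_{e_k} e_j = [e_j, e_k]`, and a bilinear map vanishes if and only if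
it vanishes on pairs of basis vectors. -/

noncomputable section

open Filter Topology

/-- ℝ⁴, modelled as `Fin 4 → ℝ`. -/
abbrev E4 : Type := Fin 4 → ℝ

/-- Coordinate partial derivative `∂_b g (x)`. -/
def pd (g : E4 → E4) (b : Fin 4) (x : E4) : E4 :=
  fderiv ℝ g x (Pi.single b 1)

/-- `fs` is the dual coframe of the frame `f`. -/
def IsDualCoframe (f fs : Fin 4 → (E4 → E4)) : Prop :=
  ∀ (x : E4) (i j : Fin 4), (∑ a, fs i x a * f j x a) = if i = j then 1 else 0

/-- A smooth frame on ℝ⁴: four smooth vector fields forming a basis at every point. -/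
def IsSmoothFrame (f : Fin 4 → (E4 → E4)) : Prop :=
  (∀ i, ContDiff ℝ (⊤ : ℕ∞) (f i)) ∧ ∀ x : E4, LinearIndependent ℝ (fun i => f i x)

/-- Connecting field `C_f x a b c = Σ_i (f* i x) c * ∂_b (f i)^a (x)` of the frame `f`
with dual coframe `fs`. -/
def conn (f fs : Fin 4 → (E4 → E4)) (x : E4) (a b c : Fin 4) : ℝ :=
  ∑ i, fs i x c * pd (f i) b x a

/-- Torsion of the connecting field of the frame `f` with dual coframe `fs`. -/
def torsion (f fs : Fin 4 → (E4 → E4)) (x : E4) (a b c : Fin 4) : ℝ :=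
  conn f fs x a b c - conn f fs x a c b

/-- Lie bracket of vector fields on ℝ⁴. -/
def lie (X Y : E4 → E4) (x : E4) : E4 :=
  fderiv ℝ Y x (X x) - fderiv ℝ X x (Y x)

open Module VectorField

section FrameTorsion

variable {ι R M : Type*} [CommRing R] [AddCommGroup M] [Module R M]

/-- The connecting field at a point of a moving frame, as a bilinear map: `b` is the value of the
frame at the point and `D i v` is the derivative of its `i`-th leg in the direction `v`. The first
argument of the bilinear map is the direction of differentiation. -/
def frameConnection (b : Basis ι R M) (D : ι → M →ₗ[R] M) : M →ₗ[R] M →ₗ[R] M :=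
  (b.constr R D).flip

/-- The torsion at a point of the derivative operator parallelising a moving frame, as a bilinear
map: the antisymmetrisation (without a factor `1 / 2`) of `frameConnection`. -/
def frameTorsion (b : Basis ι R M) (D : ι → M →ₗ[R] M) : M →ₗ[R] M →ₗ[R] M :=
  frameConnection b D - (frameConnection b D).flip

theorem frameConnection_apply_basis (b : Basis ι R M) (D : ι → M →ₗ[R] M) (v : M) (k : ι) :
    frameConnection b D v (b k) = D k v := by
  simp only [frameConnection, LinearMap.flip_apply, Basis.constr_basis]

theorem frameConnection_apply [Fintype ι] (b : Basis ι R M) (D : ι → M →ₗ[R] M) (v w : M) :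
    frameConnection b D v w = ∑ i, b.coord i w • D i v := by
  simp only [frameConnection, LinearMap.flip_apply, Basis.constr_apply_fintype,
    LinearMap.sum_apply, LinearMap.smul_apply, Basis.equivFun_apply, Basis.coord_apply]

theorem frameTorsion_apply (b : Basis ι R M) (D : ι → M →ₗ[R] M) (v w : M) :
    frameTorsion b D v w = frameConnection b D v w - frameConnection b D w v :=
  rfl

theorem frameTorsion_apply_basis (b : Basis ι R M) (D : ι → M →ₗ[R] M) (j k : ι) :
    frameTorsion b D (b j) (b k) = D k (b j) - D j (b k) := by
  simp only [frameTorsion_apply, frameConnection_apply_basis]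

end FrameTorsion

section LieBracket

variable {ι 𝕜 E : Type*} [NontriviallyNormedField 𝕜] [NormedAddCommGroup E] [NormedSpace 𝕜 E]
  {f : ι → E → E} {f' : ι → E →L[𝕜] E} {x : E} {b : Basis ι 𝕜 E}

theorem frameTorsion_apply_basis_eq_lieBracket (hb : ∀ i, b i = f i x)
    (hf : ∀ i, HasFDerivAt (f i) (f' i) x) (j k : ι) :
    frameTorsion b (fun i => (f' i : E →ₗ[𝕜] E)) (b j) (b k) = lieBracket 𝕜 (f j) (f k) x := by
  rw [frameTorsion_apply_basis, lieBracket, (hf j).fderiv, (hf k).fderiv, hb, hb]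
  rfl

theorem stmt3_general (hb : ∀ i, b i = f i x) (hf : ∀ i, HasFDerivAt (f i) (f' i) x) :
    frameTorsion b (fun i => (f' i : E →ₗ[𝕜] E)) = 0 ↔
      ∀ j k, lieBracket 𝕜 (f j) (f k) x = 0 := by
  rw [LinearMap.ext_iff_basis b b]
  simp only [frameTorsion_apply_basis_eq_lieBracket hb hf, LinearMap.zero_apply]

end LieBracket

theorem coord_apply_eq_dotProduct {ι n R : Type*} [DecidableEq ι] [Fintype n] [CommRing R]
    {b : Basis ι R (n → R)} {θ : ι → n → R}
    (hθ : ∀ i j, θ i ⬝ᵥ b j = if i = j then 1 else 0) (i : ι) (v : n → R) :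
    b.coord i v = θ i ⬝ᵥ v := by
  suffices b.coord i = dotProductBilin R R (θ i) from LinearMap.congr_fun this v
  refine b.ext fun j => ?_
  simp [hθ, Finsupp.single_apply, eq_comm]

theorem bilin_pi_eq_zero_iff {n m p R : Type*} [Finite n] [Finite m] [DecidableEq n] [DecidableEq m]
    [CommRing R] {B : (n → R) →ₗ[R] (m → R) →ₗ[R] (p → R)} :
    B = 0 ↔ ∀ a b c, B (Pi.single b 1) (Pi.single c 1) a = 0 := by
  rw [LinearMap.ext_iff_basis (Pi.basisFun R n) (Pi.basisFun R m)]
  simp only [Pi.basisFun_apply, LinearMap.zero_apply, funext_iff, Pi.zero_apply]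
  exact ⟨fun h a b c => h b c a, fun h b c a => h a b c⟩

section Components

variable {f fs : Fin 4 → E4 → E4}

theorem IsSmoothFrame.hasFDerivAt (hf : IsSmoothFrame f) (x : E4) (i : Fin 4) :
    HasFDerivAt (f i) (fderiv ℝ (f i) x) x :=
  ((hf.1 i).differentiable (by simp) x).hasFDerivAt

/-- The basis of `ℝ⁴` formed by the legs of a smooth frame at the point `x`. -/
def IsSmoothFrame.basisAt (hf : IsSmoothFrame f) (x : E4) : Basis (Fin 4) ℝ E4 :=
  basisOfLinearIndependentOfCardEqFinrank (hf.2 x) (by simp)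

theorem IsSmoothFrame.basisAt_apply (hf : IsSmoothFrame f) (x : E4) (i : Fin 4) :
    hf.basisAt x i = f i x :=
  congrFun (coe_basisOfLinearIndependentOfCardEqFinrank _ _) i

theorem IsDualCoframe.coord_basisAt_single (hdual : IsDualCoframe f fs) (hf : IsSmoothFrame f)
    (x : E4) (i c : Fin 4) : (hf.basisAt x).coord i (Pi.single c 1) = fs i x c := by
  have pairing (i j : Fin 4) : fs i x ⬝ᵥ hf.basisAt x j = if i = j then 1 else 0 := by
    rw [hf.basisAt_apply]
    exact hdual x i j
  rw [coord_apply_eq_dotProduct (θ := fun i => fs i x) pairing, dotProduct_single_one]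

theorem conn_eq_frameConnection (hf : IsSmoothFrame f) (hdual : IsDualCoframe f fs)
    (x : E4) (a b c : Fin 4) :
    conn f fs x a b c =
      frameConnection (hf.basisAt x) (fun i => (fderiv ℝ (f i) x : E4 →ₗ[ℝ] E4))
        (Pi.single b 1) (Pi.single c 1) a := by
  simp only [conn, pd, frameConnection_apply, hdual.coord_basisAt_single, Finset.sum_apply,
    Pi.smul_apply, smul_eq_mul, ContinuousLinearMap.coe_coe]

theorem torsion_eq_zero_iff_frameTorsion_eq_zero (hf : IsSmoothFrame f)
    (hdual : IsDualCoframe f fs) (x : E4) :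
    (∀ a b c, torsion f fs x a b c = 0) ↔
      frameTorsion (hf.basisAt x) (fun i => (fderiv ℝ (f i) x : E4 →ₗ[ℝ] E4)) = 0 := by
  simp only [bilin_pi_eq_zero_iff, torsion, conn_eq_frameConnection hf hdual, frameTorsion_apply,
    Pi.sub_apply]

end Components

/-- the torsion of the derivative operator parallelising the frame `f`
vanishes at a point `x` if and only if all Lie brackets of frame legs vanish at `x`
(i.e. the frame is holonomic at `x`). -/
theorem stmt3
    (f fs : Fin 4 → (E4 → E4))
    (hframe : IsSmoothFrame f)
    (hdual : IsDualCoframe f fs)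
    (x : E4) :
    (∀ a b c : Fin 4, torsion f fs x a b c = 0) ↔
      (∀ j k : Fin 4, lie (f j) (f k) x = 0) :=
  (torsion_eq_zero_iff_frameTorsion_eq_zero hframe hdual x).trans
    (stmt3_general (hframe.basisAt_apply x) (hframe.hasFDerivAt x))
end
end

section
/- For each λ > 0 let ê λ : Fin 4 → ℝ⁴ be a basis of ℝ⁴ with dual basis (ê λ)* : Fin 4 → ℝ⁴ (so Σ_a ((ê λ)* i) a * (ê λ j) a = if i = j then 1 else 0), and let f : Fin 4 → ℝ⁴ be a basis with dual basis f*. Then the following are equivalent as λ → 0⁺: (A) (ê λ)* 0 → f* 0 and λ^{-1/2} • (ê λ)* i → f* i for i = 1, 2, 3; (B) ê λ 0 → f 0 and √λ • ê λ i → f i for i = 1, 2, 3. That is, the convergence conditions on the cotetrad imply those on the tetrad and vice versa. -/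
noncomputable section

open Filter Topology

/-- `bs` is the dual basis of the basis `b` of ℝ⁴. -/
def IsDualBasis (b bs : Fin 4 → E4) : Prop :=
  ∀ i j : Fin 4, (∑ a, bs i a * b j a) = if i = j then 1 else 0

/-!
Rescaling the tetrad by weights `c` and the cotetrad by `c⁻¹` preserves duality, so both sets of
conditions say that one of two mutually dual families converges. In coordinates, dual families are
the rows of `A` and of `(A⁻¹)ᵀ`, and matrix inversion is continuous at every invertible matrix.
-/

open Function Matrix

/-- `bs` is a family of covectors dual to the family of vectors `b`, both given by coordinates.
This is `IsDualBasis` over any commutative semiring; the families need not span. -/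
def IsDualFamily {R ι m : Type*} [CommSemiring R] [DecidableEq ι] [Fintype m]
    (b bs : ι → m → R) : Prop :=
  ∀ i j, bs i ⬝ᵥ b j = if i = j then 1 else 0

namespace IsDualFamily

section Algebra

variable {R K ι m : Type*} [CommSemiring R] [Semifield K] [DecidableEq ι] [Fintype m]

protected theorem symm {b bs : ι → m → R} (h : IsDualFamily b bs) : IsDualFamily bs b := by
  intro i j
  simpa only [dotProduct_comm, eq_comm] using h j i

theorem smul_inv_smul {b bs : ι → m → K} (h : IsDualFamily b bs) {c : ι → K}
    (hc : ∀ i, c i ≠ 0) :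
    IsDualFamily (fun i => c i • b i) (fun i => (c i)⁻¹ • bs i) := by
  intro i j
  rw [smul_dotProduct, dotProduct_smul, h i j]
  split_ifs with hij
  · subst hij
    simp only [smul_eq_mul, mul_one, inv_mul_cancel₀ (hc i)]
  · simp only [smul_zero]

theorem of_mul_transpose_eq_one {b bs : ι → m → R} (h : IsDualFamily b bs) :
    of bs * (of b)ᵀ = 1 := by
  ext i j
  rw [one_apply]
  exact h i j

end Algebra

theorem of_eq_transpose_inv {R ι : Type*} [CommRing R] [Fintype ι] [DecidableEq ι]
    {b bs : ι → ι → R} (h : IsDualFamily b bs) : of b = (of bs)⁻¹ᵀ := by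
  rw [inv_eq_right_inv h.of_mul_transpose_eq_one, transpose_transpose]

end IsDualFamily

section Convergence

variable {α ι 𝕜 : Type*} [Fintype ι] [DecidableEq ι] [Field 𝕜] [TopologicalSpace 𝕜]
  [IsTopologicalDivisionRing 𝕜] {l : Filter α} {e es : α → ι → ι → 𝕜} {b bs : ι → ι → 𝕜}

theorem continuousAt_matrix_inv_of_det_ne_zero {A : Matrix ι ι 𝕜} (hA : A.det ≠ 0) :
    ContinuousAt Inv.inv A :=
  continuousAt_matrix_inv A <| by simpa only [Ring.inverse_eq_inv'] using continuousAt_inv₀ hA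

namespace IsDualFamily

theorem tendsto_of_dual (he : ∀ᶠ x in l, IsDualFamily (e x) (es x)) (hb : IsDualFamily b bs)
    (hes : Tendsto es l (𝓝 bs)) : Tendsto e l (𝓝 b) := by
  have hdet : (of bs).det ≠ 0 := det_ne_zero_of_right_inverse hb.of_mul_transpose_eq_one
  have hinv : Tendsto (fun x => (of (es x))⁻¹ᵀ) l (𝓝 (of bs)⁻¹ᵀ) :=
    (continuous_id.matrix_transpose.tendsto _).comp
      ((continuousAt_matrix_inv_of_det_ne_zero hdet).tendsto.comp hes)
  rw [← hb.of_eq_transpose_inv] at hinv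
  exact hinv.congr' (he.mono fun _ hx => hx.of_eq_transpose_inv.symm)

theorem tendsto_dual_iff (he : ∀ᶠ x in l, IsDualFamily (e x) (es x)) (hb : IsDualFamily b bs) :
    Tendsto es l (𝓝 bs) ↔ Tendsto e l (𝓝 b) :=
  ⟨tendsto_of_dual he hb, tendsto_of_dual (he.mono fun _ => IsDualFamily.symm) hb.symm⟩

theorem tendsto_inv_smul_iff (he : ∀ᶠ x in l, IsDualFamily (e x) (es x))
    (hb : IsDualFamily b bs) {c : ι → α → 𝕜} (hc : ∀ i, ∀ᶠ x in l, c i x ≠ 0) :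
    (∀ i, Tendsto (fun x => (c i x)⁻¹ • es x i) l (𝓝 (bs i))) ↔
      ∀ i, Tendsto (fun x => c i x • e x i) l (𝓝 (b i)) := by
  have hscaled : ∀ᶠ x in l,
      IsDualFamily (fun i => c i x • e x i) (fun i => (c i x)⁻¹ • es x i) := by
    filter_upwards [he, eventually_all.2 hc] with x hx hcx using hx.smul_inv_smul hcx
  simpa only [tendsto_pi_nhds (g := b), tendsto_pi_nhds (g := bs)]
    using tendsto_dual_iff hscaled hb

end IsDualFamily

theorem stmt6_general (he : ∀ᶠ x in l, IsDualFamily (e x) (es x)) (hb : IsDualFamily b bs)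
    (i₀ : ι) {c : α → 𝕜} (hc : ∀ᶠ x in l, c x ≠ 0) :
    (Tendsto (fun x => es x i₀) l (𝓝 (bs i₀)) ∧
      ∀ i, i ≠ i₀ → Tendsto (fun x => (c x)⁻¹ • es x i) l (𝓝 (bs i))) ↔
    (Tendsto (fun x => e x i₀) l (𝓝 (b i₀)) ∧
      ∀ i, i ≠ i₀ → Tendsto (fun x => c x • e x i) l (𝓝 (b i))) := by
  have hw : ∀ i, ∀ᶠ x in l, update (fun _ : ι => c) i₀ 1 i x ≠ 0 :=
    (forall_update_iff _ fun _ (w : α → 𝕜) => ∀ᶠ x in l, w x ≠ 0).2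
      ⟨.of_forall fun _ => one_ne_zero, fun _ _ => hc⟩
  have hiff := IsDualFamily.tendsto_inv_smul_iff he hb hw
  rw [forall_update_iff _ fun i (w : α → 𝕜) => Tendsto (fun x => (w x)⁻¹ • es x i) l (𝓝 (bs i)),
    forall_update_iff _ fun i (w : α → 𝕜) => Tendsto (fun x => w x • e x i) l (𝓝 (b i))] at hiff
  simpa only [Pi.one_apply, inv_one, one_smul] using hiff

end Convergence

/-- for a λ-family of bases `ê λ` with dual bases `(ê λ)*` and a basis `f`
with dual basis `f*`, the cotetrad convergence conditions
`(ê λ)* 0 → f* 0`, `λ^{-1/2} • (ê λ)* i → f* i` (i = 1,2,3) hold as λ → 0⁺ if and only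
if the tetrad convergence conditions `ê λ 0 → f 0`, `√λ • ê λ i → f i` (i = 1,2,3) do. -/
theorem stmt6
    (eh ehs : ℝ → Fin 4 → E4)
    (hdualeh : ∀ l : ℝ, 0 < l → IsDualBasis (eh l) (ehs l))
    (f fs : Fin 4 → E4)
    (hdualf : IsDualBasis f fs) :
    -- (A): convergence conditions on the cotetrad
    ((Tendsto (fun l : ℝ => ehs l 0) (nhdsWithin 0 (Set.Ioi 0)) (nhds (fs 0))) ∧
      (∀ i : Fin 4, i ≠ 0 →
        Tendsto (fun l : ℝ => (Real.sqrt l)⁻¹ • ehs l i) (nhdsWithin 0 (Set.Ioi 0))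
          (nhds (fs i))))
    ↔
    -- (B): convergence conditions on the tetrad
    ((Tendsto (fun l : ℝ => eh l 0) (nhdsWithin 0 (Set.Ioi 0)) (nhds (f 0))) ∧
      (∀ i : Fin 4, i ≠ 0 →
        Tendsto (fun l : ℝ => Real.sqrt l • eh l i) (nhdsWithin 0 (Set.Ioi 0))
          (nhds (f i)))) :=
  stmt6_general (eventually_mem_nhdsWithin.mono hdualeh) hdualf 0
    (eventually_mem_nhdsWithin.mono fun _ hl => (Real.sqrt_pos.2 hl).ne')
end
end

section
/- For each λ > 0 let ê λ be a smooth frame on ℝ⁴ with dual coframe (ê λ)*, and let f be a smooth frame on ℝ⁴ with dual coframe f*. Suppose that, pointwise in x as λ → 0⁺: (ê λ)* 0 x → f* 0 x; λ^{-1/2} • (ê λ)* i x → f* i x for i = 1, 2, 3; fderiv ℝ (ê λ 0) x → fderiv ℝ (f 0) x; and fderiv ℝ (√λ • ê λ i) x → fderiv ℝ (f i) x for i = 1, 2, 3. Then the connecting field of ê λ converges pointwise to the connecting field of f: for all x, a, b, c, Σ_i ((ê λ)* i x) c * ∂_b (ê λ i)^a (x) → Σ_i (f* i x) c * ∂_b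 (f i)^a (x) as λ → 0⁺. In particular, no further assumption is needed for the limiting derivative operator to exist, and the limit is the derivative operator parallelising the limiting frame f. -/
noncomputable section

open Filter Topology

/-!
The connecting field is a continuous (bilinear) function of the coframe and of the derivatives of
the frame, and it does not change when each leg of the frame is multiplied by a nonzero constant
and the matching leg of the coframe by its inverse. Multiplying the spacelike legs by `√λ` therefore
leaves the connecting field of `ê λ` as it is, while turning the hypotheses into convergence of the
coframe and of the derivatives.
-/

section ConnectingField

variable {ι κ 𝕜 : Type*} [Fintype ι] [DecidableEq κ] [NontriviallyNormedField 𝕜]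

/-- The connecting field `C a b c = Σ_i (θ i) c * ∂_b (e i)^a` at a single point, as a function of
the derivatives `D i` of the legs `e i` and of the values `θ i` of the coframe at that point.
Taking `D` to be arbitrary lets a limit of connecting fields be written down before it is known to
come from a frame. -/
def connectingField (D : ι → (κ → 𝕜) →L[𝕜] (κ → 𝕜)) (θ : ι → κ → 𝕜) (a b c : κ) : 𝕜 :=
  ∑ i, θ i c * D i (Pi.single b 1) a

theorem connectingField_smul_inv_smul {s : ι → 𝕜} (hs : ∀ i, s i ≠ 0)
    (D : ι → (κ → 𝕜) →L[𝕜] (κ → 𝕜)) (θ : ι → κ → 𝕜) :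
    connectingField (fun i => s i • D i) (fun i => (s i)⁻¹ • θ i) = connectingField D θ := by
  funext a b c
  refine Finset.sum_congr rfl fun i _ => ?_
  change (s i)⁻¹ * θ i c * (s i * D i (Pi.single b 1) a) = θ i c * D i (Pi.single b 1) a
  rw [mul_mul_mul_comm, inv_mul_cancel₀ (hs i), one_mul]

theorem tendsto_connectingField {α : Type*} {l : Filter α}
    {D : α → ι → (κ → 𝕜) →L[𝕜] (κ → 𝕜)} {θ : α → ι → κ → 𝕜}
    {D₀ : ι → (κ → 𝕜) →L[𝕜] (κ → 𝕜)} {θ₀ : ι → κ → 𝕜}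
    (hD : ∀ i, Tendsto (fun t => D t i) l (𝓝 (D₀ i)))
    (hθ : ∀ i, Tendsto (fun t => θ t i) l (𝓝 (θ₀ i))) (a b c : κ) :
    Tendsto (fun t => connectingField (D t) (θ t) a b c) l (𝓝 (connectingField D₀ θ₀ a b c)) := by
  refine tendsto_finsetSum _ fun i _ => ((hθ i).apply_nhds c).mul ?_
  exact ((hD i).eval_const (Pi.single b 1)).apply_nhds a

theorem stmt8_general [Finite κ] {α : Type*} {l : Filter α} {s : ι → α → 𝕜}
    (hs : ∀ i, ∀ᶠ t in l, s i t ≠ 0)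
    {e : α → ι → (κ → 𝕜) → (κ → 𝕜)} {θ : α → ι → κ → 𝕜} {x : κ → 𝕜}
    (he : ∀ i, ∀ᶠ t in l, DifferentiableAt 𝕜 (e t i) x)
    {D₀ : ι → (κ → 𝕜) →L[𝕜] (κ → 𝕜)} {θ₀ : ι → κ → 𝕜}
    (hD : ∀ i, Tendsto (fun t => fderiv 𝕜 (s i t • e t i) x) l (𝓝 (D₀ i)))
    (hθ : ∀ i, Tendsto (fun t => (s i t)⁻¹ • θ t i) l (𝓝 (θ₀ i)))
    (a b c : κ) :
    Tendsto (fun t => connectingField (fun i => fderiv 𝕜 (e t i) x) (θ t) a b c) l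
      (𝓝 (connectingField D₀ θ₀ a b c)) := by
  have := Fintype.ofFinite κ
  refine (tendsto_connectingField hD hθ a b c).congr' ?_
  filter_upwards [eventually_all.2 hs, eventually_all.2 he] with t hst het
  have hfderiv : ∀ i, fderiv 𝕜 (s i t • e t i) x = s i t • fderiv 𝕜 (e t i) x :=
    fun i => fderiv_const_smul (het i) (s i t)
  simp only [hfderiv, connectingField_smul_inv_smul hst]

end ConnectingField

theorem conn_eq_connectingField (f fs : Fin 4 → E4 → E4) (x : E4) :
    conn f fs x = connectingField (fun i => fderiv ℝ (f i) x) (fun i => fs i x) :=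
  rfl

/-- The factor by which leg `i` of `ê λ` is rescaled: `1` on the timelike leg `0` and `√λ` on the
spacelike legs. It is a function of `λ` for each `i`, so that `Function.forall_update_iff` splits
a property of all legs into the two cases. -/
def legScale : Fin 4 → ℝ → ℝ :=
  Function.update (fun _ => Real.sqrt) 0 1

theorem forall_legScale_iff {p : Fin 4 → (ℝ → ℝ) → Prop} :
    (∀ i, p i (legScale i)) ↔ p 0 1 ∧ ∀ i ≠ 0, p i Real.sqrt :=
  Function.forall_update_iff _ p

theorem eventually_legScale_ne_zero : ∀ i, ∀ᶠ l in 𝓝[>] (0 : ℝ), legScale i l ≠ 0 := by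
  refine forall_legScale_iff (p := fun _ r => ∀ᶠ l in 𝓝[>] (0 : ℝ), r l ≠ 0).2
    ⟨.of_forall fun _ => one_ne_zero, fun _ _ => ?_⟩
  filter_upwards [self_mem_nhdsWithin] with l hl using (Real.sqrt_pos.2 hl).ne'

theorem IsSmoothFrame.differentiableAt {f : Fin 4 → E4 → E4} (hf : IsSmoothFrame f) (i : Fin 4)
    (x : E4) : DifferentiableAt ℝ (f i) x :=
  (hf.1 i).differentiable (by simp) x

theorem tendsto_inv_legScale_smul {V : Type*} [AddCommGroup V] [Module ℝ V] [TopologicalSpace V]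
    {l : Filter ℝ} {θ : ℝ → Fin 4 → V} {θ₀ : Fin 4 → V}
    (htime : Tendsto (fun t => θ t 0) l (𝓝 (θ₀ 0)))
    (hspace : ∀ i ≠ 0, Tendsto (fun t => (√t)⁻¹ • θ t i) l (𝓝 (θ₀ i))) :
    ∀ i, Tendsto (fun t => (legScale i t)⁻¹ • θ t i) l (𝓝 (θ₀ i)) :=
  (forall_legScale_iff (p := fun i r => Tendsto (fun t => (r t)⁻¹ • θ t i) l (𝓝 (θ₀ i)))).2
    ⟨by simpa using htime, hspace⟩

theorem tendsto_fderiv_legScale_smul {E F : Type*} [NormedAddCommGroup E] [NormedSpace ℝ E]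
    [NormedAddCommGroup F] [NormedSpace ℝ F] {l : Filter ℝ} {e : ℝ → Fin 4 → E → F} {x : E}
    {D₀ : Fin 4 → E →L[ℝ] F} (htime : Tendsto (fun t => fderiv ℝ (e t 0) x) l (𝓝 (D₀ 0)))
    (hspace : ∀ i ≠ 0, Tendsto (fun t => fderiv ℝ (√t • e t i) x) l (𝓝 (D₀ i))) :
    ∀ i, Tendsto (fun t => fderiv ℝ (legScale i t • e t i) x) l (𝓝 (D₀ i)) :=
  (forall_legScale_iff (p := fun i r => Tendsto (fun t => fderiv ℝ (r t • e t i) x) l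
    (𝓝 (D₀ i)))).2 ⟨by simpa using htime, hspace⟩

/-- if a λ-family of smooth frames `ê λ` converges to a smooth frame `f`
in the sense that, pointwise, `(ê λ)* 0 → f* 0`, `λ^{-1/2} • (ê λ)* i → f* i`
(i = 1,2,3), `fderiv (ê λ 0) → fderiv (f 0)` and `fderiv (√λ • ê λ i) → fderiv (f i)`
(i = 1,2,3), then the connecting field of `ê λ` converges pointwise to the connecting
field of `f` — no further assumption is needed. -/
theorem stmt8
    (eh ehs : ℝ → Fin 4 → (E4 → E4))
    (hehframe : ∀ l : ℝ, 0 < l → IsSmoothFrame (eh l))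
    (hehdual : ∀ l : ℝ, 0 < l → IsDualCoframe (eh l) (ehs l))
    (f fs : Fin 4 → (E4 → E4))
    (hfframe : IsSmoothFrame f)
    (hfdual : IsDualCoframe f fs)
    (hcoframe0 : ∀ x : E4,
      Tendsto (fun l : ℝ => ehs l 0 x) (nhdsWithin 0 (Set.Ioi 0)) (nhds (fs 0 x)))
    (hcoframei : ∀ i : Fin 4, i ≠ 0 → ∀ x : E4,
      Tendsto (fun l : ℝ => (Real.sqrt l)⁻¹ • ehs l i x) (nhdsWithin 0 (Set.Ioi 0))
        (nhds (fs i x)))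
    (hderiv0 : ∀ x : E4,
      Tendsto (fun l : ℝ => fderiv ℝ (eh l 0) x) (nhdsWithin 0 (Set.Ioi 0))
        (nhds (fderiv ℝ (f 0) x)))
    (hderivi : ∀ i : Fin 4, i ≠ 0 → ∀ x : E4,
      Tendsto (fun l : ℝ => fderiv ℝ (Real.sqrt l • eh l i) x) (nhdsWithin 0 (Set.Ioi 0))
        (nhds (fderiv ℝ (f i) x))) :
    ∀ (x : E4) (a b c : Fin 4),
      Tendsto (fun l : ℝ => conn (eh l) (ehs l) x a b c) (nhdsWithin 0 (Set.Ioi 0))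
        (nhds (conn f fs x a b c)) := by
  intro x a b c
  have hdiff : ∀ i, ∀ᶠ l in 𝓝[>] (0 : ℝ), DifferentiableAt ℝ (eh l i) x := fun i =>
    eventually_mem_nhdsWithin.mono fun l hl => (hehframe l hl).differentiableAt i x
  simp only [conn_eq_connectingField]
  exact stmt8_general eventually_legScale_ne_zero hdiff
    (tendsto_fderiv_legScale_smul (hderiv0 x) fun i hi => hderivi i hi x)
    (tendsto_inv_legScale_smul (hcoframe0 x) fun i hi => hcoframei i hi x) a b c
end
end

section
/- Let e : Fin 4 → ℝ⁴ be the standard basis of ℝ⁴ with dual basis e*. For λ > 0 define the basis ê λ 0 = e 0 + λ^{-1/2} • e 1, and ê λ i = λ^{-1/2} • e i for i = 1, 2, 3. Then: (i) ê λ is a basis of ℝ⁴ for every λ > 0; (ii) (ê λ)* 0 = e* 0 for all λ, so (ê λ)* 0 → e* 0 as λ → 0⁺ (the first cotetrad condition holds); (iii) √λ • ê λ i = e i for all λ and i = 1, 2, 3 (the spacelike tetrad conditions hold); but (iv) ê λ 0 does not converge as λ → 0⁺, and (v) (ê λ)* 1 = −e* 0 + √λ • e* 1, so λ^{-1/2}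 • (ê λ)* 1 does not converge as λ → 0⁺. Hence the mixed combination of the first cotetrad condition with the spacelike tetrad conditions is strictly weaker than the full set of tetrad-and-cotetrad convergence conditions. -/
noncomputable section

open Filter Topology

/-! The frame `ê λ` is the standard frame scaled by `λ^{-1/2}`, except that its vector `e 0` is
instead sheared by `λ^{-1/2} • e 1`. Inverting the shear moves the correction to the dual vector of
index `1`: the coframe is the standard one scaled by `√λ`, except that `(ê λ)* 0 = e* 0` and
`(ê λ)* 1` acquires the term `-e* 0`. The exceptional vector `ê λ 0` and, after rescaling, the
exceptional covector `(ê λ)* 1` thus each have a coordinate `±λ^{-1/2}`, which is unbounded. -/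

section DualFrame

variable {ι R : Type*} [Fintype ι] [DecidableEq ι]

/-- `bs` is dual to the frame `b` of `ι → R`: the analogue of `IsDualBasis` over any finite index
type and any semiring, with covectors given by their coordinates in the standard dual basis. -/
def IsDualFrame [Semiring R] (b bs : ι → ι → R) : Prop :=
  ∀ i j, bs i ⬝ᵥ b j = if i = j then 1 else 0

theorem isDualFrame_iff_mul_transpose [Semiring R] {b bs : ι → ι → R} :
    IsDualFrame b bs ↔ Matrix.of bs * (Matrix.of b).transpose = 1 := by
  simp only [IsDualFrame, ← Matrix.ext_iff, Matrix.mul_apply', Matrix.one_apply]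
  rfl

theorem IsDualFrame.unique [CommRing R] {b bs bs' : ι → ι → R} (h : IsDualFrame b bs)
    (h' : IsDualFrame b bs') : bs = bs' :=
  Matrix.of.injective <| Matrix.left_inv_eq_left_inv (isDualFrame_iff_mul_transpose.mp h)
    (isDualFrame_iff_mul_transpose.mp h')

theorem IsDualFrame.linearIndependent [CommRing R] {b bs : ι → ι → R} (h : IsDualFrame b bs) :
    LinearIndependent R b :=
  .of_pairwise_dual_eq_zero_one b (fun i => dotProductEquiv R ι (bs i))
    (fun i j hij => (h i j).trans (if_neg hij)) (fun i => (h i i).trans (if_pos rfl))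

end DualFrame

section ShearedFrame

variable {ι K : Type*} [DecidableEq ι] [Field K] {o p : ι} {ε : K}

/-- The frame `ê λ` for `ε = √λ`, with arbitrary indices `o`, `p` in place of `0`, `1`: the
standard frame scaled by `ε⁻¹`, with the vector of index `o` replaced by `e o + ε⁻¹ • e p`. -/
def shearedFrame (o p : ι) (ε : K) : ι → ι → K :=
  Function.update (fun i => ε⁻¹ • Pi.single i 1) o (Pi.single o 1 + ε⁻¹ • Pi.single p 1)

/-- The coframe dual to `shearedFrame o p ε`, for `o ≠ p` and `ε ≠ 0`. -/
def shearedCoframe (o p : ι) (ε : K) : ι → ι → K :=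
  Function.update (Function.update (fun i => ε • Pi.single i 1) p
    (-Pi.single o 1 + ε • Pi.single p 1)) o (Pi.single o 1)

theorem shearedFrame_self (o p : ι) (ε : K) :
    shearedFrame o p ε o = Pi.single o 1 + ε⁻¹ • Pi.single p 1 :=
  Function.update_self ..

theorem shearedFrame_of_ne {i : ι} (hi : i ≠ o) (p : ι) (ε : K) :
    shearedFrame o p ε i = ε⁻¹ • Pi.single i 1 :=
  Function.update_of_ne hi ..

theorem shearedCoframe_self (o p : ι) (ε : K) : shearedCoframe o p ε o = Pi.single o 1 :=
  Function.update_self ..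

theorem shearedCoframe_shear (hop : o ≠ p) (ε : K) :
    shearedCoframe o p ε p = -Pi.single o 1 + ε • Pi.single p 1 :=
  (Function.update_of_ne hop.symm ..).trans (Function.update_self ..)

theorem shearedCoframe_of_ne {i : ι} (hio : i ≠ o) (hip : i ≠ p) (ε : K) :
    shearedCoframe o p ε i = ε • Pi.single i 1 :=
  (Function.update_of_ne hio ..).trans (Function.update_of_ne hip ..)

theorem eq_shearedFrame {b : ι → ι → K} (h_self : b o = Pi.single o 1 + ε⁻¹ • Pi.single p 1)
    (h_ne : ∀ i, i ≠ o → b i = ε⁻¹ • Pi.single i 1) : b = shearedFrame o p ε :=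
  Function.eq_update_iff.mpr ⟨h_self, h_ne⟩

theorem smul_shearedFrame_of_ne {i : ι} (hi : i ≠ o) (p : ι) (hε : ε ≠ 0) :
    ε • shearedFrame o p ε i = Pi.single i 1 := by
  rw [shearedFrame_of_ne hi, smul_inv_smul₀ hε]

theorem shearedFrame_self_apply_shear (hop : o ≠ p) (ε : K) : shearedFrame o p ε o p = ε⁻¹ := by
  simp [shearedFrame_self, hop]

theorem shearedCoframe_shear_apply_self (hop : o ≠ p) (ε : K) :
    shearedCoframe o p ε p o = -1 := by
  simp [shearedCoframe_shear hop, hop]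

theorem dotProduct_shearedFrame_self [Fintype ι] (v : ι → K) (o p : ι) (ε : K) :
    v ⬝ᵥ shearedFrame o p ε o = v o + ε⁻¹ * v p := by
  simp only [shearedFrame_self, dotProduct_add, dotProduct_smul, dotProduct_single_one,
    smul_eq_mul]

theorem dotProduct_shearedFrame_of_ne [Fintype ι] (v : ι → K) {j : ι} (hj : j ≠ o) (p : ι)
    (ε : K) : v ⬝ᵥ shearedFrame o p ε j = ε⁻¹ * v j := by
  simp only [shearedFrame_of_ne hj, dotProduct_smul, dotProduct_single_one, smul_eq_mul]

theorem isDualFrame_shearedFrame [Fintype ι] (hop : o ≠ p) (hε : ε ≠ 0) :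
    IsDualFrame (shearedFrame o p ε) (shearedCoframe o p ε) := by
  intro i j
  rcases eq_or_ne j o with rfl | hjo
  · rw [dotProduct_shearedFrame_self]
    rcases eq_or_ne i j with rfl | hij
    · simp [shearedCoframe_self, hop.symm]
    rcases eq_or_ne i p with rfl | hip
    · simp [shearedCoframe_shear hop, hop, hop.symm, hε]
    · simp [shearedCoframe_of_ne hij hip, hij, hip.symm, hij.symm]
  · rw [dotProduct_shearedFrame_of_ne _ hjo]
    rcases eq_or_ne i o with rfl | hio
    · simp [shearedCoframe_self, hjo, hjo.symm]
    rcases eq_or_ne i p with rfl | hip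
    · simp [shearedCoframe_shear hop, hjo, Pi.single_apply, hε, eq_comm]
    · simp [shearedCoframe_of_ne hio hip, Pi.single_apply, hε, eq_comm]

end ShearedFrame

section Limits

theorem tendsto_sqrt_nhdsGT_zero : Tendsto Real.sqrt (𝓝[>] 0) (𝓝[>] 0) := by
  refine tendsto_nhdsWithin_iff.mpr ⟨?_, ?_⟩
  · simpa only [Real.sqrt_zero] using
      (Real.continuous_sqrt.tendsto 0).mono_left nhdsWithin_le_nhds
  · filter_upwards [self_mem_nhdsWithin] with l hl using Real.sqrt_pos.mpr hl

theorem not_exists_tendsto_of_tendsto_abs_apply_atTop {α ι : Type*} {f : Filter α} [f.NeBot]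
    {u : α → ι → ℝ} (i : ι) (hu : Tendsto (fun a => |u a i|) f atTop) :
    ¬ ∃ v, Tendsto u f (𝓝 v) := by
  rintro ⟨v, hv⟩
  exact not_tendsto_nhds_of_tendsto_atTop hu _ (tendsto_pi_nhds.mp hv i).abs

variable {α ι : Type*} [DecidableEq ι] {o p : ι} {f : Filter α} [f.NeBot] {ε : α → ℝ}

theorem not_exists_tendsto_shearedFrame_self (hop : o ≠ p) (hε : Tendsto ε f (𝓝[>] 0)) :
    ¬ ∃ v, Tendsto (fun a => shearedFrame o p (ε a) o) f (𝓝 v) := by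
  refine not_exists_tendsto_of_tendsto_abs_apply_atTop p ?_
  simp only [shearedFrame_self_apply_shear hop]
  exact tendsto_abs_atTop_atTop.comp hε.inv_tendsto_nhdsGT_zero

theorem not_exists_tendsto_inv_smul_shearedCoframe_shear (hop : o ≠ p)
    (hε : Tendsto ε f (𝓝[>] 0)) :
    ¬ ∃ v, Tendsto (fun a => (ε a)⁻¹ • shearedCoframe o p (ε a) p) f (𝓝 v) := by
  refine not_exists_tendsto_of_tendsto_abs_apply_atTop o ?_
  simp only [Pi.smul_apply, shearedCoframe_shear_apply_self hop, smul_eq_mul, mul_neg_one,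
    abs_neg]
  exact tendsto_abs_atTop_atTop.comp hε.inv_tendsto_nhdsGT_zero

end Limits

theorem stmt11_general {ι : Type*} [Fintype ι] [DecidableEq ι] {o p : ι} (hop : o ≠ p)
    (eh ehs : ℝ → ι → ι → ℝ)
    (heh_self : ∀ l, 0 < l → eh l o = Pi.single o 1 + (√l)⁻¹ • Pi.single p 1)
    (heh_ne : ∀ l, 0 < l → ∀ i, i ≠ o → eh l i = (√l)⁻¹ • Pi.single i 1)
    (hdual : ∀ l, 0 < l → IsDualFrame (eh l) (ehs l)) :
    (∀ l, 0 < l → LinearIndependent ℝ (eh l)) ∧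
    (∀ l, 0 < l → ehs l o = Pi.single o 1) ∧
    Tendsto (fun l => ehs l o) (𝓝[>] 0) (𝓝 (Pi.single o 1)) ∧
    (∀ l, 0 < l → ∀ i, i ≠ o → √l • eh l i = Pi.single i 1) ∧
    (∀ i, i ≠ o → Tendsto (fun l => √l • eh l i) (𝓝[>] 0) (𝓝 (Pi.single i 1))) ∧
    (¬ ∃ v, Tendsto (fun l => eh l o) (𝓝[>] 0) (𝓝 v)) ∧
    (∀ l, 0 < l → ehs l p = -Pi.single o 1 + √l • Pi.single p 1) ∧
    (¬ ∃ v, Tendsto (fun l => (√l)⁻¹ • ehs l p) (𝓝[>] 0) (𝓝 v)) := by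
  have sqrt_ne {l : ℝ} (hl : 0 < l) : √l ≠ 0 := (Real.sqrt_pos.mpr hl).ne'
  have frame_eq (l : ℝ) (hl : 0 < l) : eh l = shearedFrame o p √l :=
    eq_shearedFrame (heh_self l hl) (heh_ne l hl)
  have dual (l : ℝ) (hl : 0 < l) : IsDualFrame (eh l) (shearedCoframe o p √l) :=
    frame_eq l hl ▸ isDualFrame_shearedFrame hop (sqrt_ne hl)
  have coframe_eq (l : ℝ) (hl : 0 < l) : ehs l = shearedCoframe o p √l :=
    (hdual l hl).unique (dual l hl)
  have coframe_self (l : ℝ) (hl : 0 < l) : ehs l o = Pi.single o 1 := by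
    rw [coframe_eq l hl, shearedCoframe_self]
  have smul_frame (l : ℝ) (hl : 0 < l) (i : ι) (hi : i ≠ o) : √l • eh l i = Pi.single i 1 := by
    rw [frame_eq l hl, smul_shearedFrame_of_ne hi p (sqrt_ne hl)]
  refine ⟨fun l hl => (dual l hl).linearIndependent, coframe_self,
    EventuallyEq.tendsto (eventually_nhdsWithin_of_forall coframe_self), smul_frame,
    fun i hi => EventuallyEq.tendsto <|
      eventually_nhdsWithin_of_forall fun l hl => smul_frame l hl i hi,
    ?_, fun l hl => by rw [coframe_eq l hl, shearedCoframe_shear hop], ?_⟩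
  · rintro ⟨v, hv⟩
    refine not_exists_tendsto_shearedFrame_self hop tendsto_sqrt_nhdsGT_zero
      ⟨v, hv.congr' (eventually_nhdsWithin_of_forall fun l hl => ?_)⟩
    rw [frame_eq l hl]
  · rintro ⟨v, hv⟩
    refine not_exists_tendsto_inv_smul_shearedCoframe_shear hop tendsto_sqrt_nhdsGT_zero
      ⟨v, hv.congr' (eventually_nhdsWithin_of_forall fun l hl => ?_)⟩
    rw [coframe_eq l hl]

/-- with `e` the standard basis of ℝ⁴, the family
`ê λ 0 = e 0 + λ^{-1/2} • e 1`, `ê λ i = λ^{-1/2} • e i` (i = 1,2,3) is a basis for every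
λ > 0 which satisfies the first cotetrad condition (`(ê λ)* 0 = e* 0` is constant) and
the spacelike tetrad conditions (`√λ • ê λ i = e i`), yet `ê λ 0` does not converge and
`λ^{-1/2} • (ê λ)* 1` does not converge as λ → 0⁺: the mixed combination of convergence
conditions is strictly weaker than the full set. -/
theorem stmt11
    (eh ehs : ℝ → Fin 4 → E4)
    (heh0 : ∀ l : ℝ, eh l 0 = (Pi.single 0 1 : E4) + (Real.sqrt l)⁻¹ • (Pi.single 1 1 : E4))
    (hehi : ∀ l : ℝ, ∀ i : Fin 4, i ≠ 0 → eh l i = (Real.sqrt l)⁻¹ • (Pi.single i 1 : E4))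
    (hdual : ∀ l : ℝ, 0 < l → IsDualBasis (eh l) (ehs l)) :
    -- (i) ê λ is a basis of ℝ⁴ for every λ > 0
    (∀ l : ℝ, 0 < l → LinearIndependent ℝ (eh l)) ∧
    -- (ii) (ê λ)* 0 = e* 0 for all λ > 0, so it converges to e* 0
    (∀ l : ℝ, 0 < l → ehs l 0 = Pi.single 0 1) ∧
    (Tendsto (fun l : ℝ => ehs l 0) (nhdsWithin 0 (Set.Ioi 0))
      (nhds (Pi.single 0 1 : E4))) ∧
    -- (iii) √λ • ê λ i = e i for all λ > 0 and i = 1,2,3, so it converges to e i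
    (∀ l : ℝ, 0 < l → ∀ i : Fin 4, i ≠ 0 →
      Real.sqrt l • eh l i = (Pi.single i 1 : E4)) ∧
    (∀ i : Fin 4, i ≠ 0 →
      Tendsto (fun l : ℝ => Real.sqrt l • eh l i) (nhdsWithin 0 (Set.Ioi 0))
        (nhds (Pi.single i 1 : E4))) ∧
    -- (iv) ê λ 0 does not converge as λ → 0⁺
    (¬ ∃ v : E4, Tendsto (fun l : ℝ => eh l 0) (nhdsWithin 0 (Set.Ioi 0)) (nhds v)) ∧
    -- (v) (ê λ)* 1 = −e* 0 + √λ • e* 1, and λ^{-1/2} • (ê λ)* 1 does not converge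
    (∀ l : ℝ, 0 < l →
      ehs l 1 = -(Pi.single 0 1 : E4) + Real.sqrt l • (Pi.single 1 1 : E4)) ∧
    (¬ ∃ v : E4, Tendsto (fun l : ℝ => (Real.sqrt l)⁻¹ • ehs l 1)
      (nhdsWithin 0 (Set.Ioi 0)) (nhds v)) :=
  stmt11_general (by decide) eh ehs (fun l _ => heh0 l) (fun l _ => hehi l) hdual
end
end
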